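/- Suppose d + 2 < min(2, 1/β)·α. Then for t > 0 and x, x' ∈ ℝ^d, ∫_0^t ∫_{ℝ^d} [G_{t-r}(x'-y) - G_{t-r}(x-y)]² dy dr ≤ C t^{1 - (d+2)β/α} |x'-x|², with explicit constant C = 2π^{d/2} B((d+2)/α, 2-(d+2)/α) ν^{-(d+2)/α} Γ(1+β)^{(d+2)/α} / ((2π)^d Γ(d/2) α (1-(d+2)β/α)). -/

import Mathlib

open MeasureTheory Real Set
open scoped RealInnerProductSpace

/-- The Mittag-Leffler function `E_β(x) = ∑_{k≥0} x^k / Γ(1+βk)`. -/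
noncomputable def mittagLeffler (β x : ℝ) : ℝ := ∑' k : ℕ, x ^ k / Real.Gamma (1 + β * k)

/-- The Beta function `B(a,b) = Γ(a)Γ(b)/Γ(a+b)`. -/
noncomputable def betaFn (a b : ℝ) : ℝ := Real.Gamma a * Real.Gamma b / Real.Gamma (a + b)

/-! The increment `G_s(· + h) - G_s` has Fourier transform `(e^{2πi⟪h, w⟫} - 1) Ĝ_s(2πw)`, so by
Plancherel and `|e^{iθ} - 1| ≤ |θ|` its squared `L²` norm is at most
`|h|² ∫ |2πw|² E_β(-ν s^β |2πw|^α)² dw`. Inserting `E_β(-x) ≤ 1 / (1 + x / Γ(1 + β))` leaves a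
radial Beta integral, a multiple of `s^{-(d + 2)β/α}`, whose exponent exceeds `-1` exactly when
`d + 2 < α/β`.

For the bound on `E_β`, the function `w(t) = E_β(-x t^β)` solves the Abel equation
`w(t) = 1 - x / Γ(β) ∫₀ᵗ (t - s)^{β - 1} w(s) ds`. As soon as `w` is known to be decreasing, the
integral is at least `w(1) / β` at `t = 1`, and the bound follows. Monotonicity amounts to
`E_{β,β} ≥ 0` on the negative axis: `t^{β - 1} E_{β,β}(-x t^β)` solves another Abel equation, and a
solution that is positive near `0` cannot reach a first zero, because the kernel satisfies
`(b - s)^{β - 1} ≤ (b / a)^{β - 1} (a - s)^{β - 1}` for `s < a ≤ b`. -/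

section PowerIntegrals

theorem intervalIntegrable_sub_rpow {a b r : ℝ} (hr : -1 < r) :
    IntervalIntegrable (fun s => (b - s) ^ r) volume a b := by
  simpa using
    (intervalIntegral.intervalIntegrable_rpow' (a := b - a) (b := 0) hr).comp_sub_left b

theorem integral_sub_rpow {a b r : ℝ} (hr : -1 < r) :
    ∫ s in a..b, (b - s) ^ r = (b - a) ^ (r + 1) / (r + 1) := by
  rw [intervalIntegral.integral_comp_sub_left (fun s => s ^ r) b, integral_rpow (Or.inl hr)]
  simp [zero_rpow (by linarith : r + 1 ≠ 0)]

theorem setIntegral_comp_sub_left_le_of_le_rpow {f : ℝ → ℝ} {A r t : ℝ} (hr : -1 < r)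
    (ht : 0 ≤ t) (hf₀ : ∀ s > 0, 0 ≤ f s) (hf : ∀ s > 0, f s ≤ A * s ^ r) :
    ∫ s in Ioc 0 t, f (t - s) ≤ A * (t ^ (r + 1) / (r + 1)) := by
  have hint : IntegrableOn (fun s => (t - s) ^ r) (Ioo 0 t) :=
    (intervalIntegrable_iff_integrableOn_Ioo_of_le ht).1 (intervalIntegrable_sub_rpow hr)
  have hvalue : ∫ s in Ioo 0 t, A * (t - s) ^ r = A * (t ^ (r + 1) / (r + 1)) := by
    rw [integral_const_mul, ← integral_Ioc_eq_integral_Ioo,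
      ← intervalIntegral.integral_of_le ht, integral_sub_rpow hr, sub_zero]
  rw [integral_Ioc_eq_integral_Ioo, ← hvalue]
  refine integral_mono_of_nonneg ?_ (hint.const_mul A) ?_ <;>
    filter_upwards [ae_restrict_mem measurableSet_Ioo] with s hs
  · exact hf₀ _ (sub_pos.2 hs.2)
  · exact hf _ (sub_pos.2 hs.2)

theorem integral_sub_rpow_mul_le {β a b M : ℝ} {w : ℝ → ℝ} (hβ : 0 < β) (hab : a ≤ b)
    (hint : IntervalIntegrable (fun s => (b - s) ^ (β - 1) * w s) volume a b)
    (hw : ∀ s ∈ Ioo a b, w s ≤ M) :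
    ∫ s in a..b, (b - s) ^ (β - 1) * w s ≤ (b - a) ^ β / β * M := by
  have hr : -1 < β - 1 := by linarith
  calc ∫ s in a..b, (b - s) ^ (β - 1) * w s
      ≤ ∫ s in a..b, (b - s) ^ (β - 1) * M := by
        refine intervalIntegral.integral_mono_on_of_le_Ioo hab hint
          ((intervalIntegrable_sub_rpow hr).mul_const M) fun s hs => ?_
        have : 0 ≤ b - s := by linarith [hs.2]
        gcongr
        exact hw s hs
    _ = (b - a) ^ β / β * M := by
        rw [intervalIntegral.integral_mul_const, integral_sub_rpow hr, sub_add_cancel]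

theorem le_integral_sub_rpow_mul {β a b m : ℝ} {w : ℝ → ℝ} (hβ : 0 < β) (hab : a ≤ b)
    (hint : IntervalIntegrable (fun s => (b - s) ^ (β - 1) * w s) volume a b)
    (hw : ∀ s ∈ Ioo a b, m ≤ w s) :
    (b - a) ^ β / β * m ≤ ∫ s in a..b, (b - s) ^ (β - 1) * w s := by
  have h := integral_sub_rpow_mul_le (w := fun s => -w s) (M := -m) hβ hab
    (by simpa only [mul_neg, Pi.neg_def] using hint.neg) fun s hs => neg_le_neg (hw s hs)
  simpa using h

theorem sub_rpow_le_div_rpow_mul_sub_rpow {s a b r : ℝ} (hs : 0 ≤ s) (hsa : s < a) (hab : a ≤ b)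
    (hr : r ≤ 0) : (b - s) ^ r ≤ (b / a) ^ r * (a - s) ^ r := by
  have ha : 0 < a := hs.trans_lt hsa
  have hb : 0 < b := ha.trans_le hab
  have hsub : 0 < a - s := sub_pos.2 hsa
  rw [← mul_rpow (by positivity) hsub.le]
  refine rpow_le_rpow_of_nonpos (by positivity) ?_ hr
  rw [div_mul_eq_mul_div, div_le_iff₀ ha]
  nlinarith

theorem integral_sub_rpow_mul_rpow {γ δ t : ℝ} (hγ : 0 < γ) (hδ : 0 < δ) (ht : 0 < t) :
    ∫ s in (0 : ℝ)..t, (t - s) ^ (δ - 1) * s ^ (γ - 1) = t ^ (γ + δ - 1) * betaFn γ δ := by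
  have h := Complex.betaIntegral_scaled (γ : ℂ) (δ : ℂ) ht
  rw [Complex.betaIntegral_eq_Gamma_mul_div _ _ (by simpa) (by simpa), ← Complex.ofReal_add,
    Complex.Gamma_ofReal, Complex.Gamma_ofReal, Complex.Gamma_ofReal] at h
  rw [← Complex.ofReal_inj, ← intervalIntegral.integral_ofReal, betaFn]
  push_cast [Complex.ofReal_cpow ht.le] at h ⊢
  rw [← h]
  refine intervalIntegral.integral_congr fun s hs => ?_
  rw [uIcc_of_le ht.le] at hs
  push_cast [Complex.ofReal_cpow hs.1, Complex.ofReal_cpow (sub_nonneg.2 hs.2)]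
  ring

theorem integral_sub_rpow_mul_rpow_div_Gamma {γ δ t : ℝ} (hγ : 0 < γ) (hδ : 0 < δ) (ht : 0 < t) :
    ∫ s in (0 : ℝ)..t, (t - s) ^ (δ - 1) * (s ^ (γ - 1) / Gamma γ) =
      Gamma δ * (t ^ (γ + δ - 1) / Gamma (γ + δ)) := by
  simp_rw [← mul_div_assoc]
  rw [intervalIntegral.integral_div, integral_sub_rpow_mul_rpow hγ hδ ht, betaFn]
  have := (Gamma_pos_of_pos hγ).ne'
  field_simp

theorem betaFn_pos {a b : ℝ} (ha : 0 < a) (hb : 0 < b) : 0 < betaFn a b :=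
  div_pos (mul_pos (Gamma_pos_of_pos ha) (Gamma_pos_of_pos hb)) (Gamma_pos_of_pos (add_pos ha hb))

theorem intervalIntegrable_sub_rpow_mul_rpow {γ δ t : ℝ} (hγ : 0 < γ) (hδ : 0 < δ) (ht : 0 < t) :
    IntervalIntegrable (fun s => (t - s) ^ (δ - 1) * s ^ (γ - 1)) volume 0 t := by
  rw [intervalIntegrable_iff_integrableOn_Ioc_of_le ht.le]
  apply Integrable.of_integral_ne_zero
  rw [← intervalIntegral.integral_of_le ht.le, integral_sub_rpow_mul_rpow hγ hδ ht]
  have := betaFn_pos hγ hδ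
  positivity

end PowerIntegrals

section AbelEquation

open Filter Topology

/-- `w` solves the Abel integral equation of the second kind
`w(t) = g(t) - K ∫₀ᵗ (t - s)^{β - 1} w(s) ds` on `(0, ∞)`. Integrability is part of the definition,
since otherwise the integral could be `0` by convention. -/
structure IsAbelSolution (β K : ℝ) (g w : ℝ → ℝ) : Prop where
  intervalIntegrable : ∀ ⦃t : ℝ⦄, 0 < t →
    IntervalIntegrable (fun s => (t - s) ^ (β - 1) * w s) volume 0 t
  eq_sub : ∀ ⦃t : ℝ⦄, 0 < t → w t = g t - K * ∫ s in (0 : ℝ)..t, (t - s) ^ (β - 1) * w s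

theorem exists_first_nonpos {w : ℝ → ℝ} {T : ℝ} (hcont : ContinuousOn w (Ioi 0))
    (hnear : ∀ᶠ s in 𝓝[>] 0, 0 < w s) (hT : 0 < T) (hwT : w T ≤ 0) :
    ∃ b > 0, w b ≤ 0 ∧ ∀ s ∈ Ioo 0 b, 0 < w s := by
  obtain ⟨ε, hε, hwε⟩ := mem_nhdsGT_iff_exists_Ioo_subset.1 hnear
  have hεT : ε ≤ T := le_of_not_gt fun h => (hwε ⟨hT, h⟩).not_ge hwT
  have hclosed : IsClosed (Icc ε T ∩ w ⁻¹' Iic 0) :=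
    (hcont.mono fun s hs => lt_of_lt_of_le hε hs.1).preimage_isClosed_of_isClosed
      isClosed_Icc isClosed_Iic
  obtain ⟨b, ⟨hb, hwb⟩, hleast⟩ :=
    (isCompact_Icc.of_isClosed_subset hclosed inter_subset_left).exists_isLeast
      ⟨T, ⟨hεT, le_rfl⟩, hwT⟩
  refine ⟨b, lt_of_lt_of_le hε hb.1, hwb, fun s hs => ?_⟩
  rcases lt_or_ge s ε with hsε | hεs
  · exact hwε ⟨hs.1, hsε⟩
  · exact lt_of_not_ge fun hws => hs.2.not_ge (hleast ⟨⟨hεs, hs.2.le.trans hb.2⟩, hws⟩)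

theorem exists_forall_Icc_div_rpow_sub_pos {β b : ℝ} (K : ℝ) (hβ : 0 < β) (hb : 0 < b) :
    ∃ c ∈ Ioo 0 b, ∀ a ∈ Icc c b, 0 < (b / a) ^ (β - 1) - K * ((b - a) ^ β / β) := by
  have hcont : ContinuousAt (fun a : ℝ => (b / a) ^ (β - 1) - K * ((b - a) ^ β / β)) b := by
    have hdiv : ContinuousAt (fun a : ℝ => (b / a) ^ (β - 1)) b :=
      (continuousAt_const.div continuousAt_id hb.ne').rpow_const
        (Or.inl (div_ne_zero hb.ne' hb.ne'))
    have hsub : ContinuousAt (fun a : ℝ => (b - a) ^ β) b :=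
      (continuousAt_const.sub continuousAt_id).rpow_const (Or.inr hβ.le)
    exact hdiv.sub (continuousAt_const.mul (hsub.div_const β))
  have hpos : ∀ᶠ a in 𝓝 b, 0 < (b / a) ^ (β - 1) - K * ((b - a) ^ β / β) :=
    hcont.eventually_const_lt (by simp [hb.ne', zero_rpow hβ.ne'])
  obtain ⟨c, hc, hcb⟩ := mem_nhdsLE_iff_exists_Icc_subset.1
    (mem_nhdsWithin_of_mem_nhds (hpos.and (lt_mem_nhds hb)))
  exact ⟨c, ⟨(hcb ⟨le_rfl, le_of_lt hc⟩).2, hc⟩, fun a ha => (hcb ha).1⟩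

namespace IsAbelSolution

variable {β K : ℝ} {g w : ℝ → ℝ}

theorem intervalIntegrable_of_mem {t c d : ℝ} (hw : IsAbelSolution β K g w) (ht : 0 < t)
    (hc : c ∈ Icc 0 t) (hd : d ∈ Icc 0 t) :
    IntervalIntegrable (fun s => (t - s) ^ (β - 1) * w s) volume c d :=
  (hw.intervalIntegrable ht).mono_set (uIcc_of_le ht.le ▸ uIcc_subset_Icc hc hd)

theorem div_rpow_mul_sub_integral_le {a b : ℝ} (hw : IsAbelSolution β K g w) (hβ : β ≤ 1)
    (hK : 0 ≤ K) (ha : 0 < a) (hab : a ≤ b) (hpos : ∀ s ∈ Ioo 0 a, 0 ≤ w s)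
    (hg : (b / a) ^ (β - 1) * g a ≤ g b) :
    (b / a) ^ (β - 1) * w a - K * ∫ s in a..b, (b - s) ^ (β - 1) * w s ≤ w b := by
  have hb : 0 < b := ha.trans_le hab
  have hint_left : IntervalIntegrable (fun s => (b - s) ^ (β - 1) * w s) volume 0 a :=
    hw.intervalIntegrable_of_mem hb ⟨le_rfl, hb.le⟩ ⟨ha.le, hab⟩
  have hint_right : IntervalIntegrable (fun s => (b - s) ^ (β - 1) * w s) volume a b :=
    hw.intervalIntegrable_of_mem hb ⟨ha.le, hab⟩ ⟨hb.le, le_rfl⟩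
  have hkernel : ∫ s in (0 : ℝ)..a, (b - s) ^ (β - 1) * w s
      ≤ (b / a) ^ (β - 1) * ∫ s in (0 : ℝ)..a, (a - s) ^ (β - 1) * w s := by
    rw [← intervalIntegral.integral_const_mul]
    refine intervalIntegral.integral_mono_on_of_le_Ioo ha.le hint_left
      ((hw.intervalIntegrable ha).const_mul _) fun s hs => ?_
    rw [← mul_assoc]
    exact mul_le_mul_of_nonneg_right
      (sub_rpow_le_div_rpow_mul_sub_rpow hs.1.le hs.2 hab (by linarith)) (hpos s hs)
  rw [hw.eq_sub ha, hw.eq_sub hb,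
    ← intervalIntegral.integral_add_adjacent_intervals hint_left hint_right]
  linarith [mul_le_mul_of_nonneg_left hkernel hK]

theorem pos {t : ℝ} (hw : IsAbelSolution β K g w) (hβ₀ : 0 < β) (hβ₁ : β ≤ 1) (hK : 0 ≤ K)
    (hcont : ContinuousOn w (Ioi 0)) (hnear : ∀ᶠ s in 𝓝[>] 0, 0 < w s)
    (hg : ∀ a b, 0 < a → a ≤ b → (b / a) ^ (β - 1) * g a ≤ g b) (ht : 0 < t) : 0 < w t := by
  by_contra! hwt
  obtain ⟨b, hb, hwb, hpos⟩ := exists_first_nonpos hcont hnear ht hwt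
  obtain ⟨c, hc, hφ⟩ := exists_forall_Icc_div_rpow_sub_pos K hβ₀ hb
  -- Starting the comparison at a maximum of `w` on `[c, b]` controls `w` on the rest of `[a, b]`.
  obtain ⟨a, ha, hmax⟩ := isCompact_Icc.exists_isMaxOn (nonempty_Icc.2 hc.2.le)
    (hcont.mono fun s hs => hc.1.trans_le hs.1)
  have hwa : 0 < w a := (hpos c hc).trans_le (hmax ⟨le_rfl, hc.2.le⟩)
  have ha₀ : 0 < a := hc.1.trans_le ha.1
  have hab : a < b := ha.2.lt_of_ne fun h => (h ▸ hwa).not_ge hwb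
  have hint : IntervalIntegrable (fun s => (b - s) ^ (β - 1) * w s) volume a b :=
    hw.intervalIntegrable_of_mem hb ⟨ha₀.le, hab.le⟩ ⟨hb.le, le_rfl⟩
  have htail : ∫ s in a..b, (b - s) ^ (β - 1) * w s ≤ (b - a) ^ β / β * w a :=
    integral_sub_rpow_mul_le hβ₀ hab.le hint fun s hs => hmax ⟨ha.1.trans hs.1.le, hs.2.le⟩
  have : 0 < w b := calc
    0 < ((b / a) ^ (β - 1) - K * ((b - a) ^ β / β)) * w a := mul_pos (hφ a ha) hwa
    _ = (b / a) ^ (β - 1) * w a - K * ((b - a) ^ β / β * w a) := by ring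
    _ ≤ (b / a) ^ (β - 1) * w a - K * ∫ s in a..b, (b - s) ^ (β - 1) * w s := by gcongr
    _ ≤ w b := hw.div_rpow_mul_sub_integral_le hβ₁ hK ha₀ hab.le
        (fun s hs => (hpos s ⟨hs.1, hs.2.trans hab⟩).le) (hg a b ha₀ hab.le)
  exact this.not_ge hwb

end IsAbelSolution

end AbelEquation

section MittagLeffler

theorem rpow_mul_exp_neg_le_Gamma {a x : ℝ} (ha : 0 ≤ a) (hx : 1 ≤ x) :
    a ^ (x - 1) * exp (-a) ≤ Gamma x := by
  have hconv := GammaIntegral_convergent (by linarith : 0 < x)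
  calc a ^ (x - 1) * exp (-a) = ∫ s in Ioi a, exp (-s) * a ^ (x - 1) := by
        rw [integral_mul_const, integral_exp_neg_Ioi, mul_comm]
    _ ≤ ∫ s in Ioi a, exp (-s) * s ^ (x - 1) := by
        refine setIntegral_mono_on ((integrableOn_exp_neg_Ioi a).mul_const _)
          (hconv.mono_set (Ioi_subset_Ioi ha)) measurableSet_Ioi fun s hs => ?_
        gcongr
        exact le_of_lt hs
    _ ≤ ∫ s in Ioi 0, exp (-s) * s ^ (x - 1) := by
        refine setIntegral_mono_set hconv ?_ (Ioi_subset_Ioi ha).eventuallyLE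
        filter_upwards [ae_restrict_mem measurableSet_Ioi] with s hs
        have : (0 : ℝ) < s := hs
        simp only [Pi.zero_apply]
        positivity
    _ = Gamma x := (Gamma_eq_integral (by linarith)).symm

theorem summable_pow_div_Gamma {β : ℝ} (hβ : 0 < β) (γ x : ℝ) :
    Summable fun k : ℕ => x ^ k / Gamma (β * k + γ) := by
  set A : ℝ := 2 * |x| + 1
  set a : ℝ := A ^ β⁻¹
  have hA : 0 < A := by positivity
  have ha : 0 < a := by positivity
  have hgeom : Summable fun k : ℕ => (a ^ (1 - γ) * exp a) * (|x| / A) ^ k :=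
    (summable_geometric_of_lt_one (by positivity)
      ((div_lt_one hA).2 (by simp only [A]; linarith [abs_nonneg x]))).mul_left _
  refine Summable.of_norm_bounded_eventually_nat hgeom ?_
  have hlarge : Filter.Tendsto (fun k : ℕ => β * (k : ℝ) + γ) Filter.atTop Filter.atTop :=
    Filter.tendsto_atTop_add_const_right _ _ (tendsto_natCast_atTop_atTop.const_mul_atTop hβ)
  filter_upwards [hlarge.eventually_ge_atTop 1] with k hk
  have hsplit : a ^ (β * k + γ - 1) = A ^ k * a ^ (γ - 1) := by
    rw [add_sub_assoc, rpow_add ha, ← rpow_mul hA.le, inv_mul_cancel_left₀ hβ.ne', rpow_natCast]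
  have hΓ : A ^ k * a ^ (γ - 1) * exp (-a) ≤ Gamma (β * k + γ) :=
    hsplit ▸ rpow_mul_exp_neg_le_Gamma ha.le hk
  calc ‖x ^ k / Gamma (β * k + γ)‖ = |x| ^ k / Gamma (β * k + γ) := by
        rw [norm_div, norm_pow, norm_eq_abs, norm_of_nonneg (Gamma_pos_of_pos (by linarith)).le]
    _ ≤ |x| ^ k / (A ^ k * a ^ (γ - 1) * exp (-a)) := by gcongr
    _ = (a ^ (1 - γ) * exp a) * (|x| / A) ^ k := by
        rw [← neg_sub γ 1, rpow_neg ha.le, exp_neg, div_pow]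
        field_simp

/-- The two-parameter Mittag-Leffler function `E_{β,γ}(x) = ∑_{k≥0} x^k / Γ(βk + γ)`. The parameter
`γ = 1` gives `E_β`, and `γ = β` occurs in the derivative of `t ↦ E_β(z t^β)`. -/
noncomputable def mittagLeffler₂ (β γ x : ℝ) : ℝ := ∑' k : ℕ, x ^ k / Gamma (β * k + γ)

theorem mittagLeffler_eq_mittagLeffler₂_one (β x : ℝ) :
    mittagLeffler β x = mittagLeffler₂ β 1 x := by
  simp only [mittagLeffler, mittagLeffler₂, add_comm]

theorem mittagLeffler₂_zero (β γ : ℝ) : mittagLeffler₂ β γ 0 = 1 / Gamma γ := by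
  rw [mittagLeffler₂, tsum_eq_single 0 fun k hk => by simp [hk]]
  simp

theorem mittagLeffler_zero (β : ℝ) : mittagLeffler β 0 = 1 := by
  simp [mittagLeffler_eq_mittagLeffler₂_one, mittagLeffler₂_zero]

theorem mittagLeffler₂_eq_one_div_Gamma_add {β : ℝ} (hβ : 0 < β) (γ x : ℝ) :
    mittagLeffler₂ β γ x = 1 / Gamma γ + x * mittagLeffler₂ β (γ + β) x := by
  rw [mittagLeffler₂, (summable_pow_div_Gamma hβ γ x).tsum_eq_zero_add, mittagLeffler₂,
    ← tsum_mul_left]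
  congr 1
  · simp
  · refine tsum_congr fun k => ?_
    rw [show β * ((k + 1 : ℕ) : ℝ) + γ = β * k + (γ + β) by push_cast; ring]
    ring

theorem continuous_mittagLeffler₂ {β : ℝ} (hβ : 0 < β) (γ : ℝ) :
    Continuous (mittagLeffler₂ β γ) := by
  refine continuous_iff_continuousAt.2 fun x => ?_
  have hball : ContinuousOn (mittagLeffler₂ β γ) (Metric.ball 0 (|x| + 1)) := by
    refine continuousOn_tsum (fun k => by fun_prop)
      (summable_pow_div_Gamma hβ γ (|x| + 1)).norm fun k y hy => ?_
    have hyx : ‖y‖ ≤ ‖|x| + 1‖ := by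
      rw [norm_of_nonneg (by positivity : 0 ≤ |x| + 1)]
      exact (mem_ball_zero_iff.1 hy).le
    rw [norm_div, norm_div, norm_pow, norm_pow]
    gcongr
  exact hball.continuousAt (Metric.isOpen_ball.mem_nhds (by simp))

/-- The kernel `t^{γ-1} E_{β,γ}(z t^β)`: with this normalization the family is stable under
fractional integration, which shifts `γ`. -/
noncomputable def mittagLefflerKernel (β γ z t : ℝ) : ℝ :=
  t ^ (γ - 1) * mittagLeffler₂ β γ (z * t ^ β)

theorem mittagLefflerKernel_apply_one (β γ z : ℝ) :
    mittagLefflerKernel β γ z 1 = mittagLeffler₂ β γ z := by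
  simp [mittagLefflerKernel]

theorem hasSum_mittagLefflerKernel {β t : ℝ} (hβ : 0 < β) (γ z : ℝ) (ht : 0 < t) :
    HasSum (fun k : ℕ => z ^ k * (t ^ (β * k + γ - 1) / Gamma (β * k + γ)))
      (mittagLefflerKernel β γ z t) := by
  refine ((summable_pow_div_Gamma hβ γ (z * t ^ β)).hasSum.mul_left (t ^ (γ - 1))).congr_fun
    fun k => ?_
  rw [add_sub_assoc, rpow_add ht, rpow_mul_natCast ht.le, mul_pow]
  ring

theorem continuous_mittagLeffler₂_mul_rpow {β : ℝ} (hβ : 0 < β) (γ z : ℝ) :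
    Continuous fun t : ℝ => mittagLeffler₂ β γ (z * t ^ β) :=
  (continuous_mittagLeffler₂ hβ γ).comp (continuous_const.mul (continuous_rpow_const hβ.le))

theorem continuousOn_mittagLefflerKernel {β : ℝ} (hβ : 0 < β) (γ z : ℝ) :
    ContinuousOn (mittagLefflerKernel β γ z) (Ioi 0) :=
  (continuousOn_id.rpow_const fun _ ht => Or.inl (ne_of_gt ht)).mul
    (continuous_mittagLeffler₂_mul_rpow hβ γ z).continuousOn

theorem eventually_mittagLefflerKernel_pos {β γ : ℝ} (hβ : 0 < β) (hγ : 0 < γ) (z : ℝ) :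
    ∀ᶠ t in nhdsWithin 0 (Ioi 0), 0 < mittagLefflerKernel β γ z t := by
  have hzero : 0 < mittagLeffler₂ β γ (z * (0 : ℝ) ^ β) := by
    rw [zero_rpow hβ.ne', mul_zero, mittagLeffler₂_zero]
    exact one_div_pos.2 (Gamma_pos_of_pos hγ)
  have hnear := (continuous_mittagLeffler₂_mul_rpow hβ γ z).continuousAt.eventually
    (lt_mem_nhds hzero)
  filter_upwards [nhdsWithin_le_nhds hnear, self_mem_nhdsWithin] with t hE ht
  exact mul_pos (rpow_pos_of_pos ht _) hE

theorem intervalIntegrable_sub_rpow_mul_mittagLefflerKernel {β γ δ t : ℝ} (hβ : 0 < β)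
    (hγ : 0 < γ) (hδ : 0 < δ) (z : ℝ) (ht : 0 < t) :
    IntervalIntegrable (fun s => (t - s) ^ (δ - 1) * mittagLefflerKernel β γ z s) volume 0 t := by
  simpa only [mittagLefflerKernel, mul_assoc] using
    (intervalIntegrable_sub_rpow_mul_rpow hγ hδ ht).mul_continuousOn
      (continuous_mittagLeffler₂_mul_rpow hβ γ z).continuousOn

theorem integral_sub_rpow_mul_mittagLefflerKernel {β γ δ t : ℝ} (hβ : 0 < β) (hγ : 0 < γ)
    (hδ : 0 < δ) (z : ℝ) (ht : 0 < t) :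
    ∫ s in (0 : ℝ)..t, (t - s) ^ (δ - 1) * mittagLefflerKernel β γ z s =
      Gamma δ * mittagLefflerKernel β (γ + δ) z t := by
  let φ : ℕ → ℝ → ℝ := fun k s =>
    (t - s) ^ (δ - 1) * (s ^ (β * k + γ - 1) / Gamma (β * k + γ))
  have hφ_int : ∀ k, Integrable (φ k) (volume.restrict (Ioc 0 t)) := fun k => by
    have h := intervalIntegrable_sub_rpow_mul_rpow (by positivity : 0 < β * k + γ) hδ ht
    simpa only [φ, mul_div_assoc] using
      ((intervalIntegrable_iff_integrableOn_Ioc_of_le ht.le).1 h).div_const (Gamma (β * k + γ))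
  have hφ_integral : ∀ k : ℕ, ∫ s in Ioc 0 t, φ k s =
      Gamma δ * (t ^ (β * k + (γ + δ) - 1) / Gamma (β * k + (γ + δ))) := fun k => by
    rw [← intervalIntegral.integral_of_le ht.le,
      integral_sub_rpow_mul_rpow_div_Gamma (by positivity) hδ ht, add_assoc]
  have hφ_sum : ∀ y : ℝ, HasSum (fun k : ℕ => ∫ s in Ioc 0 t, y ^ k * φ k s)
      (Gamma δ * mittagLefflerKernel β (γ + δ) y t) := fun y => by
    simp_rw [integral_const_mul, hφ_integral, mul_left_comm _ (Gamma δ)]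
    exact (hasSum_mittagLefflerKernel hβ (γ + δ) y ht).mul_left _
  have hnorm : ∀ k : ℕ, ∫ s in Ioc 0 t, ‖z ^ k * φ k s‖ = ∫ s in Ioc 0 t, |z| ^ k * φ k s :=
    fun k => setIntegral_congr_fun measurableSet_Ioc fun s hs => by
      have hφ_nonneg : 0 ≤ φ k s := mul_nonneg (rpow_nonneg (sub_nonneg.2 hs.2) _)
        (div_nonneg (rpow_nonneg hs.1.le _) (Gamma_pos_of_pos (by positivity)).le)
      simp only [norm_mul, norm_pow, norm_eq_abs, abs_of_nonneg hφ_nonneg]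
  have hexchange := hasSum_integral_of_summable_integral_norm
    (fun k => (hφ_int k).const_mul (z ^ k)) (by simpa only [hnorm] using (hφ_sum |z|).summable)
  rw [intervalIntegral.integral_of_le ht.le, (hφ_sum z).unique hexchange]
  refine setIntegral_congr_fun measurableSet_Ioc fun s hs => ?_
  rw [← ((hasSum_mittagLefflerKernel hβ γ z hs.1).mul_left _).tsum_eq]
  exact tsum_congr fun k => mul_left_comm _ _ _

theorem mittagLefflerKernel_eq_add {β t : ℝ} (hβ : 0 < β) (γ z : ℝ) (ht : 0 < t) :
    mittagLefflerKernel β γ z t =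
      t ^ (γ - 1) / Gamma γ + z * mittagLefflerKernel β (γ + β) z t := by
  rw [mittagLefflerKernel, mittagLefflerKernel, mittagLeffler₂_eq_one_div_Gamma_add hβ,
    add_sub_right_comm, rpow_add ht]
  ring

theorem isAbelSolution_mittagLefflerKernel {β γ : ℝ} (hβ : 0 < β) (hγ : 0 < γ) (z : ℝ) :
    IsAbelSolution β (-z / Gamma β) (fun t => t ^ (γ - 1) / Gamma γ)
      (mittagLefflerKernel β γ z) where
  intervalIntegrable _ ht := intervalIntegrable_sub_rpow_mul_mittagLefflerKernel hβ hγ hβ z ht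
  eq_sub t ht := by
    rw [integral_sub_rpow_mul_mittagLefflerKernel hβ hγ hβ z ht,
      mittagLefflerKernel_eq_add hβ γ z ht]
    have := (Gamma_pos_of_pos hβ).ne'
    field_simp
    ring

theorem mittagLefflerKernel_neg_pos {β γ x t : ℝ} (hβ₀ : 0 < β) (hβ₁ : β ≤ 1) (hγ : β ≤ γ)
    (hx : 0 ≤ x) (ht : 0 < t) : 0 < mittagLefflerKernel β γ (-x) t := by
  have hγ₀ : 0 < γ := hβ₀.trans_le hγ
  have hsol : IsAbelSolution β (x / Gamma β) _ _ :=
    neg_neg x ▸ isAbelSolution_mittagLefflerKernel hβ₀ hγ₀ (-x)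
  refine hsol.pos hβ₀ hβ₁ (div_nonneg hx (Gamma_pos_of_pos hβ₀).le)
    (continuousOn_mittagLefflerKernel hβ₀ γ _) (eventually_mittagLefflerKernel_pos hβ₀ hγ₀ _)
    (fun a b ha hab => ?_) ht
  have hone : 1 ≤ b / a := (one_le_div ha).2 hab
  have := Gamma_pos_of_pos hγ₀
  calc (b / a) ^ (β - 1) * (a ^ (γ - 1) / Gamma γ)
      ≤ (b / a) ^ (γ - 1) * (a ^ (γ - 1) / Gamma γ) := by gcongr
    _ = b ^ (γ - 1) / Gamma γ := by
        rw [← mul_div_assoc, ← mul_rpow (by positivity) ha.le, div_mul_cancel₀ _ ha.ne']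

theorem mittagLefflerKernel_one_eq_one_add_integral {β t : ℝ} (hβ : 0 < β) (z : ℝ) (ht : 0 < t) :
    mittagLefflerKernel β 1 z t = 1 + z * ∫ s in (0 : ℝ)..t, mittagLefflerKernel β β z s := by
  have hconv := integral_sub_rpow_mul_mittagLefflerKernel hβ hβ one_pos z ht
  simp only [sub_self, rpow_zero, one_mul, Gamma_one] at hconv
  rw [mittagLefflerKernel_eq_add hβ 1 z ht, hconv, add_comm 1 β]
  simp

theorem antitoneOn_mittagLefflerKernel_one {β x : ℝ} (hβ₀ : 0 < β) (hβ₁ : β ≤ 1) (hx : 0 ≤ x) :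
    AntitoneOn (mittagLefflerKernel β 1 (-x)) (Ioi 0) := by
  intro a ha b hb hab
  have hint := intervalIntegrable_sub_rpow_mul_mittagLefflerKernel hβ₀ hβ₀ one_pos (-x) hb
  simp only [sub_self, rpow_zero, one_mul] at hint
  have hmono := intervalIntegral.integral_mono_interval le_rfl (le_of_lt ha) hab
    (by
      filter_upwards [ae_restrict_mem measurableSet_Ioc] with s hs
      exact (mittagLefflerKernel_neg_pos hβ₀ hβ₁ le_rfl hx hs.1).le) hint
  rw [mittagLefflerKernel_one_eq_one_add_integral hβ₀ _ ha,
    mittagLefflerKernel_one_eq_one_add_integral hβ₀ _ hb]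
  linarith [mul_le_mul_of_nonneg_left hmono hx]

theorem mittagLeffler_neg_nonneg {β x : ℝ} (hβ₀ : 0 < β) (hβ₁ : β ≤ 1) (hx : 0 ≤ x) :
    0 ≤ mittagLeffler β (-x) := by
  rw [mittagLeffler_eq_mittagLeffler₂_one, ← mittagLefflerKernel_apply_one]
  exact (mittagLefflerKernel_neg_pos hβ₀ hβ₁ hβ₁ hx one_pos).le

theorem mittagLeffler_neg_le {β x : ℝ} (hβ₀ : 0 < β) (hβ₁ : β ≤ 1) (hx : 0 ≤ x) :
    mittagLeffler β (-x) ≤ 1 / (1 + x / Gamma (1 + β)) := by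
  rw [mittagLeffler_eq_mittagLeffler₂_one, ← mittagLefflerKernel_apply_one]
  set w := mittagLefflerKernel β 1 (-x)
  have hsol := isAbelSolution_mittagLefflerKernel hβ₀ one_pos (-x)
  have := Gamma_pos_of_pos hβ₀
  have hintegral : w 1 / β ≤ ∫ s in (0 : ℝ)..1, (1 - s) ^ (β - 1) * w s := by
    simpa [div_eq_inv_mul] using le_integral_sub_rpow_mul hβ₀ zero_le_one
      (hsol.intervalIntegrable one_pos) fun s hs =>
        antitoneOn_mittagLefflerKernel_one hβ₀ hβ₁ hx hs.1 (mem_Ioi.2 one_pos) hs.2.le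
  have hGamma : Gamma (1 + β) = β * Gamma β := by rw [add_comm, Gamma_add_one hβ₀.ne']
  rw [le_div_iff₀ (by rw [hGamma]; positivity)]
  calc w 1 * (1 + x / Gamma (1 + β)) = w 1 + x / Gamma β * (w 1 / β) := by
        rw [hGamma]; field_simp
    _ ≤ w 1 + x / Gamma β * ∫ s in (0 : ℝ)..1, (1 - s) ^ (β - 1) * w s := by gcongr
    _ = 1 := by
        have := hsol.eq_sub one_pos
        simp only [sub_self, rpow_zero, Gamma_one, neg_neg, div_one] at this
        linarith

end MittagLeffler

section RadialIntegrals

theorem image_div_one_sub_Ioo : (fun x : ℝ => x / (1 - x)) '' Ioo 0 1 = Ioi 0 := by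
  ext y
  constructor
  · rintro ⟨x, hx, rfl⟩
    exact div_pos hx.1 (sub_pos.2 hx.2)
  · intro (hy : 0 < y)
    refine ⟨y / (1 + y), ⟨by positivity, (div_lt_one (by positivity)).2 (by linarith)⟩, ?_⟩
    field_simp
    ring

theorem integral_rpow_div_one_add_rpow {a b : ℝ} (ha : 0 < a) (hb : 0 < b) :
    ∫ y in Ioi (0 : ℝ), y ^ (a - 1) / (1 + y) ^ (a + b) = betaFn a b := by
  have hderiv : ∀ x ∈ Ioo (0 : ℝ) 1,
      HasDerivWithinAt (fun x => x / (1 - x)) (1 / (1 - x) ^ 2) (Ioo 0 1) x := fun x hx => by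
    have h := (hasDerivAt_id x).div ((hasDerivAt_id x).const_sub 1) (sub_pos.2 hx.2).ne'
    exact h.hasDerivWithinAt.congr_deriv (by simp)
  have hinj : InjOn (fun x : ℝ => x / (1 - x)) (Ioo 0 1) := fun x hx y hy hxy => by
    have hxy' : x / (1 - x) = y / (1 - y) := hxy
    rw [div_eq_div_iff (sub_pos.2 hx.2).ne' (sub_pos.2 hy.2).ne'] at hxy'
    linarith
  have hbeta := integral_sub_rpow_mul_rpow ha hb one_pos
  rw [one_rpow, one_mul, intervalIntegral.integral_of_le zero_le_one,
    integral_Ioc_eq_integral_Ioo] at hbeta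
  rw [← image_div_one_sub_Ioo,
    integral_image_eq_integral_abs_deriv_smul measurableSet_Ioo hderiv hinj, ← hbeta]
  refine setIntegral_congr_fun measurableSet_Ioo fun x hx => ?_
  have hx1 : 0 < 1 - x := sub_pos.2 hx.2
  have hone : 1 + x / (1 - x) = (1 - x)⁻¹ := by field_simp; ring
  simp only [smul_eq_mul]
  rw [hone, abs_of_pos (by positivity), div_rpow hx.1.le hx1.le, inv_rpow hx1.le, div_inv_eq_mul,
    show a + b = (a - 1) + ((b - 1) + 2) by ring, rpow_add hx1, rpow_add hx1, rpow_two]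
  field_simp

theorem integral_rpow_div_one_add_mul_rpow_rpow {p q α c : ℝ} (hq : 0 < q) (hα : 0 < α)
    (hc : 0 < c) (hqp : q / α < p) :
    ∫ y in Ioi (0 : ℝ), y ^ (q - 1) / (1 + c * y ^ α) ^ p =
      c ^ (-q / α) / α * betaFn (q / α) (p - q / α) := by
  have hbeta := integral_rpow_div_one_add_rpow (div_pos hq hα) (sub_pos.2 hqp)
  rw [add_sub_cancel] at hbeta
  have hscale :=
    integral_comp_mul_left_Ioi' (fun y : ℝ => y ^ (q / α - 1) / (1 + y) ^ p) 0 hc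
  rw [mul_zero, hbeta, ← integral_comp_rpow_Ioi_of_pos hα, smul_eq_mul] at hscale
  rw [← hscale, ← integral_const_mul, ← integral_const_mul]
  refine setIntegral_congr_fun measurableSet_Ioi fun y (hy : 0 < y) => ?_
  simp only [smul_eq_mul]
  rw [mul_rpow hc.le (by positivity), ← rpow_mul hy.le, mul_sub, mul_div_cancel₀ _ hα.ne',
    mul_one, rpow_sub_one hc.ne', neg_div, rpow_neg hc.le,
    show q - 1 = (α - 1) + (q - α) by ring, rpow_add hy]
  field_simp

open Module in
theorem integral_fun_norm_eq_smul {V F : Type*} [NormedAddCommGroup V] [InnerProductSpace ℝ V]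
    [FiniteDimensional ℝ V] [MeasurableSpace V] [BorelSpace V] [Nontrivial V]
    [NormedAddCommGroup F] [NormedSpace ℝ F] (f : ℝ → F) :
    ∫ v : V, f ‖v‖ =
      (2 * π ^ ((finrank ℝ V : ℝ) / 2) / Gamma ((finrank ℝ V : ℝ) / 2)) •
        ∫ r in Ioi (0 : ℝ), r ^ ((finrank ℝ V : ℝ) - 1) • f r := by
  have hn : 0 < finrank ℝ V := finrank_pos
  have hn' : (0 : ℝ) < (finrank ℝ V : ℝ) / 2 := by positivity
  have hpow : ∀ r : ℝ, r ^ ((finrank ℝ V : ℝ) - 1) = r ^ (finrank ℝ V - 1) := fun r => by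
    rw [← rpow_natCast, Nat.cast_pred hn]
  have hvol : volume.real (Metric.ball (0 : V) 1) =
      π ^ ((finrank ℝ V : ℝ) / 2) / Gamma ((finrank ℝ V : ℝ) / 2 + 1) := by
    have : 0 < Gamma ((finrank ℝ V : ℝ) / 2 + 1) := Gamma_pos_of_pos (by positivity)
    rw [measureReal_def, InnerProductSpace.volume_ball, ENNReal.ofReal_one, one_pow, one_mul,
      ENNReal.toReal_ofReal (by positivity), sqrt_eq_rpow, ← rpow_mul_natCast pi_pos.le,
      one_div_mul_eq_div]
  simp_rw [hpow]
  rw [integral_fun_norm_addHaar, hvol, ← Nat.cast_smul_eq_nsmul ℝ, smul_smul,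
    Gamma_add_one hn'.ne']
  congr 1
  have := Gamma_pos_of_pos hn'
  field_simp

theorem integral_norm_rpow_div_one_add_mul_norm_rpow_rpow {V : Type*} [NormedAddCommGroup V]
    [InnerProductSpace ℝ V] [FiniteDimensional ℝ V] [MeasurableSpace V] [BorelSpace V]
    [Nontrivial V] {a p α c : ℝ} (hα : 0 < α) (hc : 0 < c) (ha : 0 < Module.finrank ℝ V + a)
    (hp : (Module.finrank ℝ V + a) / α < p) :
    ∫ v : V, ‖v‖ ^ a / (1 + c * ‖v‖ ^ α) ^ p =
      2 * π ^ ((Module.finrank ℝ V : ℝ) / 2) / Gamma ((Module.finrank ℝ V : ℝ) / 2) *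
        (c ^ (-(Module.finrank ℝ V + a) / α) / α *
          betaFn ((Module.finrank ℝ V + a) / α) (p - (Module.finrank ℝ V + a) / α)) := by
  rw [integral_fun_norm_eq_smul fun r => r ^ a / (1 + c * r ^ α) ^ p, smul_eq_mul,
    ← integral_rpow_div_one_add_mul_rpow_rpow ha hα hc hp]
  congr 1
  refine setIntegral_congr_fun measurableSet_Ioi fun r (hr : 0 < r) => ?_
  simp only [smul_eq_mul]
  rw [add_sub_right_comm, rpow_add hr, mul_div_assoc]

/-- The constant `∫ |2πw|² / (1 + |2πw|^α)² dw` over `ℝⁿ`, in closed form. -/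
noncomputable def symbolEnergy (n α : ℝ) : ℝ :=
  2 * π ^ (n / 2) * betaFn ((n + 2) / α) (2 - (n + 2) / α) / ((2 * π) ^ n * Gamma (n / 2) * α)

theorem symbolEnergy_pos {n α : ℝ} (hn : 0 < n) (hα : 0 < α) (hnα : n + 2 < 2 * α) :
    0 < symbolEnergy n α := by
  have : 0 < betaFn ((n + 2) / α) (2 - (n + 2) / α) :=
    betaFn_pos (by positivity) (sub_pos.2 ((div_lt_iff₀ hα).2 hnα))
  have : 0 < Gamma (n / 2) := Gamma_pos_of_pos (by positivity)
  unfold symbolEnergy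
  positivity

theorem integral_sq_div_one_add_mul_rpow_sq {V : Type*} [NormedAddCommGroup V]
    [InnerProductSpace ℝ V] [FiniteDimensional ℝ V] [MeasurableSpace V] [BorelSpace V]
    [Nontrivial V] {α c : ℝ} (hα : 0 < α) (hc : 0 < c) (hVα : Module.finrank ℝ V + 2 < 2 * α) :
    ∫ w : V, (2 * π * ‖w‖ / (1 + c * (2 * π * ‖w‖) ^ α)) ^ 2 =
      symbolEnergy (Module.finrank ℝ V) α * c ^ (-(Module.finrank ℝ V + 2) / α) := by
  have hscale := Measure.integral_comp_smul volume
    (fun v : V => (‖v‖ / (1 + c * ‖v‖ ^ α)) ^ 2) (2 * π)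
  simp only [norm_smul, norm_of_nonneg two_pi_pos.le] at hscale
  have hradial := integral_norm_rpow_div_one_add_mul_norm_rpow_rpow (V := V) (a := 2) (p := 2)
    hα hc (by positivity) ((div_lt_iff₀ hα).2 hVα)
  simp only [rpow_two, ← div_pow] at hradial
  rw [hscale, hradial, abs_of_pos (by positivity), symbolEnergy, smul_eq_mul, rpow_natCast]
  field_simp

end RadialIntegrals

section Plancherel

open FourierTransform SchwartzMap
open scoped ContDiff

variable {V E F : Type*} [NormedAddCommGroup V] [InnerProductSpace ℝ V] [FiniteDimensional ℝ V]
  [MeasurableSpace V] [BorelSpace V] [NormedAddCommGroup E] [NormedSpace ℂ E]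
  [NormedAddCommGroup F] [InnerProductSpace ℂ F] [CompleteSpace F]

theorem continuous_fourier {f : V → E} (hf : Integrable f) : Continuous (𝓕 f) :=
  VectorFourier.fourierIntegral_continuous Real.continuous_fourierChar
    (by simpa using continuous_inner) hf

theorem ae_eq_of_integral_schwartzMap_smul_eq [CompleteSpace E] {f g : V → E}
    (hf : LocallyIntegrable f) (hg : LocallyIntegrable g)
    (h : ∀ φ : 𝓢(V, ℂ), ∫ x, φ x • f x = ∫ x, φ x • g x) : f =ᵐ[volume] g := by
  refine ae_eq_of_integral_contDiff_smul_eq hf hg fun φ hφ hφ_supp => ?_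
  have hsupp : HasCompactSupport (Complex.ofRealCLM ∘ φ) := hφ_supp.comp_left (map_zero _)
  have hsmooth : ContDiff ℝ ∞ (Complex.ofRealCLM ∘ φ) := by fun_prop
  simpa using h (hsupp.toSchwartzMap hsmooth)

theorem integral_fourier_smul_eq [CompleteSpace E] {φ : V → ℂ} {f : V → E}
    (hφ : Integrable φ) (hf : Integrable f) :
    ∫ w, 𝓕 φ w • f w = ∫ x, φ x • 𝓕 f x := by
  have h := VectorFourier.integral_fourierIntegral_smul_eq_flip (L := innerₗ V)
    Real.continuous_fourierChar (by simpa using continuous_inner) hφ hf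
  rwa [flip_innerₗ] at h

theorem fourier_toLp_ae_eq {f : V → F} (hf : Integrable f) (hf₂ : MemLp f 2) :
    (𝓕 (hf₂.toLp f) : Lp (α := V) F 2) =ᵐ[volume] 𝓕 f := by
  refine ae_eq_of_integral_schwartzMap_smul_eq ((Lp.memLp _).locallyIntegrable one_le_two)
    (continuous_fourier hf).locallyIntegrable fun φ => ?_
  have hdistrib := congrArg (fun T => T φ) (Lp.fourier_toTemperedDistribution_eq (hf₂.toLp f))
  simp only [TemperedDistribution.fourier_apply, Lp.toTemperedDistribution_apply] at hdistrib
  rw [← hdistrib, ← integral_fourier_smul_eq φ.integrable hf]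
  refine integral_congr_ae ?_
  filter_upwards [hf₂.coeFn_toLp] with x hx
  rw [hx, fourier_coe]

theorem fourierInv_toLp_fourier_ae_eq {f : V → F} (hf : Integrable f) (hf₂ : MemLp (𝓕 f) 2) :
    (𝓕⁻ (hf₂.toLp (𝓕 f)) : Lp (α := V) F 2) =ᵐ[volume] f := by
  refine ae_eq_of_integral_schwartzMap_smul_eq ((Lp.memLp _).locallyIntegrable one_le_two)
    hf.locallyIntegrable fun φ => ?_
  have hdistrib :=
    congrArg (fun T => T φ) (Lp.fourierInv_toTemperedDistribution_eq (hf₂.toLp (𝓕 f)))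
  simp only [TemperedDistribution.fourierInv_apply, Lp.toTemperedDistribution_apply] at hdistrib
  calc _ = ∫ w, 𝓕⁻ φ w • hf₂.toLp (𝓕 f) w := hdistrib.symm
    _ = ∫ w, 𝓕⁻ φ w • 𝓕 f w := integral_congr_ae <| by
        filter_upwards [hf₂.coeFn_toLp] with w hw
        rw [hw]
    _ = ∫ x, φ x • f x := by
        rw [← integral_fourier_smul_eq (𝓕⁻ φ).integrable hf, ← fourier_coe,
          fourier_fourierInv_eq]

theorem eLpNorm_fourier_eq {f : V → F} (hf : Integrable f) :
    eLpNorm (𝓕 f) 2 = eLpNorm f 2 := by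
  by_cases hf₂ : MemLp f 2
  · rw [← eLpNorm_congr_ae (fourier_toLp_ae_eq hf hf₂), ← eLpNorm_congr_ae hf₂.coeFn_toLp,
      ← Lp.enorm_def, ← Lp.enorm_def, ← ofReal_norm, ← ofReal_norm, Lp.norm_fourier_eq]
  by_cases hF₂ : MemLp (𝓕 f) 2
  · exact absurd ((memLp_congr_ae (fourierInv_toLp_fourier_ae_eq hf hF₂)).1 (Lp.memLp _)) hf₂
  · have hf_top : eLpNorm f 2 = ⊤ := by
      by_contra h
      exact hf₂ ⟨hf.aestronglyMeasurable, lt_top_iff_ne_top.2 h⟩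
    have hF_top : eLpNorm (𝓕 f) 2 = ⊤ := by
      by_contra h
      exact hF₂ ⟨(continuous_fourier hf).aestronglyMeasurable, lt_top_iff_ne_top.2 h⟩
    rw [hf_top, hF_top]

theorem integral_norm_fourier_sq {f : V → F} (hf : Integrable f) :
    ∫ w, ‖𝓕 f w‖ ^ 2 = ∫ x, ‖f x‖ ^ 2 := by
  have h := congrArg ENNReal.toReal (eLpNorm_fourier_eq hf)
  rw [toReal_eLpNorm (continuous_fourier hf).aestronglyMeasurable,
    toReal_eLpNorm hf.aestronglyMeasurable,
    lpNorm_eq_integral_norm_rpow_toReal two_ne_zero ENNReal.ofNat_ne_top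
      (continuous_fourier hf).aestronglyMeasurable,
    lpNorm_eq_integral_norm_rpow_toReal two_ne_zero ENNReal.ofNat_ne_top
      hf.aestronglyMeasurable] at h
  simp only [ENNReal.toReal_ofNat, rpow_two] at h
  exact (rpow_left_inj (integral_nonneg fun _ => by positivity)
    (integral_nonneg fun _ => by positivity) (by norm_num)).1 h

end Plancherel

section Increments

open FourierTransform

variable {V E F : Type*} [NormedAddCommGroup V] [InnerProductSpace ℝ V] [FiniteDimensional ℝ V]
  [MeasurableSpace V] [BorelSpace V] [NormedAddCommGroup E] [NormedSpace ℂ E]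
  [NormedAddCommGroup F] [InnerProductSpace ℂ F] [CompleteSpace F]

theorem fourier_comp_add_right (f : V → E) (h w : V) :
    𝓕 (fun x => f (x + h)) w = fourierChar ⟪h, w⟫ • 𝓕 f w :=
  congrFun (VectorFourier.fourierIntegral_comp_add_right fourierChar volume (innerₗ V) f h) w

theorem norm_fourier_increment_le {f : V → E} (hf : Integrable f) (h w : V) :
    ‖𝓕 (fun x => f (x + h) - f x) w‖ ≤ 2 * π * ‖w‖ * ‖𝓕 f w‖ * ‖h‖ := by
  have hsub : 𝓕 (fun x => f (x + h) - f x) w =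
      (Complex.exp (Complex.I * (2 * π * ⟪h, w⟫ : ℝ)) - 1) • 𝓕 f w := by
    have hlin : 𝓕 (fun x => f (x + h) - f x) w = 𝓕 (fun x => f (x + h)) w - 𝓕 f w := by
      simp only [Real.fourier_eq, smul_sub]
      exact integral_sub ((Real.fourierIntegral_convergent_iff w).2 (hf.comp_add_right h))
        ((Real.fourierIntegral_convergent_iff w).2 hf)
    rw [hlin, fourier_comp_add_right, sub_smul, one_smul, Circle.smul_def, fourierChar_apply,
      mul_comm Complex.I]
  rw [hsub, norm_smul]
  calc ‖Complex.exp (Complex.I * (2 * π * ⟪h, w⟫ : ℝ)) - 1‖ * ‖𝓕 f w‖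
      ≤ 2 * π * (‖h‖ * ‖w‖) * ‖𝓕 f w‖ := by
        gcongr
        refine Real.norm_exp_I_mul_ofReal_sub_one_le.trans ?_
        rw [norm_mul, norm_of_nonneg two_pi_pos.le]
        gcongr
        exact norm_inner_le_norm h w
    _ = 2 * π * ‖w‖ * ‖𝓕 f w‖ * ‖h‖ := by ring

theorem integral_norm_increment_sq_le {f : V → F} (hf : Integrable f)
    (henergy : Integrable fun w => (2 * π * ‖w‖ * ‖𝓕 f w‖) ^ 2) (h : V) :
    ∫ x, ‖f (x + h) - f x‖ ^ 2 ≤ (∫ w, (2 * π * ‖w‖ * ‖𝓕 f w‖) ^ 2) * ‖h‖ ^ 2 := by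
  have hincr : Integrable fun x => f (x + h) - f x := (hf.comp_add_right h).sub hf
  rw [← integral_norm_fourier_sq hincr, ← integral_mul_const]
  refine integral_mono_of_nonneg (.of_forall fun w => by positivity) (henergy.mul_const _)
    (.of_forall fun w => ?_)
  simp only [← mul_pow]
  gcongr
  exact norm_fourier_increment_le hf h w

theorem integral_norm_increment_sq_le_symbolEnergy [Nontrivial V] {f : V → F} {α c : ℝ}
    (hα : 0 < α) (hc : 0 < c) (hVα : Module.finrank ℝ V + 2 < 2 * α) (hf : Integrable f)
    (hdecay : ∀ w, ‖𝓕 f w‖ ≤ 1 / (1 + c * (2 * π * ‖w‖) ^ α)) (h : V) :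
    ∫ x, ‖f (x + h) - f x‖ ^ 2 ≤ symbolEnergy (Module.finrank ℝ V) α *
      c ^ (-(Module.finrank ℝ V + 2) / α) * ‖h‖ ^ 2 := by
  have hn : (0 : ℝ) < Module.finrank ℝ V := Nat.cast_pos.2 Module.finrank_pos
  have henergy := integral_sq_div_one_add_mul_rpow_sq (V := V) hα hc hVα
  have hint : Integrable fun w : V => (2 * π * ‖w‖ / (1 + c * (2 * π * ‖w‖) ^ α)) ^ 2 := by
    refine .of_integral_ne_zero ?_
    rw [henergy]
    exact (mul_pos (symbolEnergy_pos hn hα hVα) (rpow_pos_of_pos hc _)).ne'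
  have hle : ∀ w, (2 * π * ‖w‖ * ‖𝓕 f w‖) ^ 2 ≤
      (2 * π * ‖w‖ / (1 + c * (2 * π * ‖w‖) ^ α)) ^ 2 := fun w => by
    rw [div_eq_mul_one_div (2 * π * ‖w‖)]
    gcongr
    exact hdecay w
  have hint' : Integrable fun w => (2 * π * ‖w‖ * ‖𝓕 f w‖) ^ 2 := by
    have hcont := continuous_fourier hf
    refine hint.mono' (by fun_prop) (.of_forall fun w => ?_)
    rw [norm_of_nonneg (by positivity)]
    exact hle w
  rw [← henergy]
  exact (integral_norm_increment_sq_le hf hint' h).trans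
    (mul_le_mul_of_nonneg_right (integral_mono hint' hint hle) (sq_nonneg _))

theorem fourier_eq_integral_exp_inner (f : V → E) (w : V) :
    𝓕 f w = ∫ x, Complex.exp (Complex.I * (⟪-(2 * π) • w, x⟫ : ℝ)) • f x := by
  simp only [Real.fourier_eq', real_inner_smul_left, real_inner_comm w, mul_comm Complex.I,
    neg_mul]

end Increments

section FractionalHeatKernel

open FourierTransform

variable {V : Type*} [NormedAddCommGroup V] [InnerProductSpace ℝ V] [FiniteDimensional ℝ V]
  [MeasurableSpace V] [BorelSpace V] {α β κ : ℝ} {g : V → ℝ}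

theorem integrable_of_integral_exp_inner_eq_mittagLeffler (hα : α ≠ 0)
    (hg : ∀ ξ, ∫ x, Complex.exp (Complex.I * (⟪ξ, x⟫ : ℝ)) * (g x : ℂ) =
      mittagLeffler β (-(κ * ‖ξ‖ ^ α))) :
    Integrable g := by
  -- At `ξ = 0` the value is `1`, whereas the integral of a non-integrable function is `0`.
  refine .of_integral_ne_zero ?_
  have hmass := hg 0
  simp only [inner_zero_left, Complex.ofReal_zero, mul_zero, Complex.exp_zero, one_mul, norm_zero,
    zero_rpow hα, neg_zero, mittagLeffler_zero, integral_complex_ofReal] at hmass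
  exact_mod_cast hmass.trans_ne one_ne_zero

theorem integral_increment_sq_le_of_integral_exp_inner_eq_mittagLeffler [Nontrivial V]
    (hα : 0 < α) (hβ₀ : 0 < β) (hβ₁ : β ≤ 1) (hκ : 0 < κ) (hVα : Module.finrank ℝ V + 2 < 2 * α)
    (hg : ∀ ξ, ∫ x, Complex.exp (Complex.I * (⟪ξ, x⟫ : ℝ)) * (g x : ℂ) =
      mittagLeffler β (-(κ * ‖ξ‖ ^ α)))
    (x x' : V) :
    ∫ y, (g (x' - y) - g (x - y)) ^ 2 ≤ symbolEnergy (Module.finrank ℝ V) α *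
      (κ / Gamma (1 + β)) ^ (-(Module.finrank ℝ V + 2) / α) * ‖x' - x‖ ^ 2 := by
  have hg_int := integrable_of_integral_exp_inner_eq_mittagLeffler hα.ne' hg
  have hΓ : 0 < Gamma (1 + β) := Gamma_pos_of_pos (by linarith)
  have hdecay : ∀ w, ‖𝓕 (fun x => (g x : ℂ)) w‖ ≤
      1 / (1 + κ / Gamma (1 + β) * (2 * π * ‖w‖) ^ α) := fun w => by
    have hsymbol : 0 ≤ κ * (2 * π * ‖w‖) ^ α := by positivity
    simp_rw [fourier_eq_integral_exp_inner, smul_eq_mul, hg]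
    rw [norm_smul, norm_neg, norm_of_nonneg two_pi_pos.le,
      Complex.norm_of_nonneg (mittagLeffler_neg_nonneg hβ₀ hβ₁ hsymbol), div_mul_eq_mul_div]
    exact mittagLeffler_neg_le hβ₀ hβ₁ hsymbol
  have h := integral_norm_increment_sq_le_symbolEnergy hα (div_pos hκ hΓ) hVα hg_int.ofReal
    hdecay (x' - x)
  simp only [← Complex.ofReal_sub, Complex.norm_real, norm_eq_abs, sq_abs] at h
  calc ∫ y, (g (x' - y) - g (x - y)) ^ 2 = ∫ z, (g (z + (x' - x)) - g z) ^ 2 := by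
        rw [← integral_sub_left_eq_self (fun z => (g (z + (x' - x)) - g z) ^ 2) volume x]
        simp only [add_comm (x - _), sub_add_sub_cancel]
    _ ≤ _ := h

theorem spatial_increment_upper_estimate_general [Nontrivial V] {ν : ℝ} (hν : 0 < ν)
    (hβ₀ : 0 < β) (hβ₁ : β ≤ 1) (hVα : Module.finrank ℝ V + 2 < min 2 β⁻¹ * α) {G : ℝ → V → ℝ}
    (hG : ∀ s > 0, ∀ ξ, ∫ x, Complex.exp (Complex.I * (⟪ξ, x⟫ : ℝ)) * (G s x : ℂ) =
      mittagLeffler β (-(ν * ‖ξ‖ ^ α * s ^ β)))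
    {t : ℝ} (ht : 0 ≤ t) (x x' : V) :
    ∫ r in Ioc 0 t, ∫ y, (G (t - r) (x' - y) - G (t - r) (x - y)) ^ 2 ≤
      (2 * π ^ ((Module.finrank ℝ V : ℝ) / 2) *
          betaFn ((Module.finrank ℝ V + 2) / α) (2 - (Module.finrank ℝ V + 2) / α) *
          ν ^ (-(Module.finrank ℝ V + 2) / α) *
          Gamma (1 + β) ^ ((Module.finrank ℝ V + 2) / α)) /
        ((2 * π) ^ (Module.finrank ℝ V : ℝ) * Gamma ((Module.finrank ℝ V : ℝ) / 2) * α *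
          (1 - (Module.finrank ℝ V + 2) * β / α)) *
        t ^ (1 - (Module.finrank ℝ V + 2) * β / α) * ‖x' - x‖ ^ 2 := by
  set n : ℝ := (Module.finrank ℝ V : ℝ) with hn
  have hα : 0 < α := pos_of_mul_pos_right ((by positivity : 0 < n + 2).trans hVα) (by positivity)
  have hnα : n + 2 < 2 * α := hVα.trans_le (by gcongr; exact min_le_left _ _)
  have hnαβ : (n + 2) * β / α < 1 := by
    have h : n + 2 < β⁻¹ * α := hVα.trans_le (by gcongr; exact min_le_right _ _)
    rwa [inv_mul_eq_div, lt_div_iff₀ hβ₀, ← div_lt_one hα] at h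
  have hΓ : 0 < Gamma (1 + β) := Gamma_pos_of_pos (by linarith)
  have hfixed : ∀ s > 0, ∫ y, (G s (x' - y) - G s (x - y)) ^ 2 ≤
      symbolEnergy n α * (ν ^ (-(n + 2) / α) * Gamma (1 + β) ^ ((n + 2) / α)) * ‖x' - x‖ ^ 2 *
        s ^ (-((n + 2) * β / α)) := fun s hs => by
    refine (integral_increment_sq_le_of_integral_exp_inner_eq_mittagLeffler hα hβ₀ hβ₁
      (by positivity : 0 < ν * s ^ β) hnα (fun ξ => ?_) x x').trans_eq ?_
    · rw [hG s hs ξ, mul_right_comm]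
    · rw [div_rpow (by positivity) hΓ.le, mul_rpow hν.le (by positivity), ← rpow_mul hs.le, ← hn,
        show β * (-(n + 2) / α) = -((n + 2) * β / α) by ring, neg_div, rpow_neg hΓ.le,
        div_inv_eq_mul]
      ring
  refine (setIntegral_comp_sub_left_le_of_le_rpow (by linarith) ht
    (fun s _ => integral_nonneg fun y => sq_nonneg _) hfixed).trans_eq ?_
  rw [symbolEnergy, neg_add_eq_sub]
  generalize 1 - (n + 2) * β / α = q
  ring

end FractionalHeatKernel

theorem spatial_increment_upper_estimate (d : ℕ) (hd : 1 ≤ d) (ν β α : ℝ)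
    (hν : 0 < ν) (hβ0 : 0 < β) (hβ1 : β < 1) (hα0 : 0 < α) (hα2 : α ≤ 2)
    (hdα : (d : ℝ) + 2 < min 2 β⁻¹ * α)
    (G : ℝ → EuclideanSpace ℝ (Fin d) → ℝ)
    (hF : ∀ s > (0 : ℝ), ∀ ξ : EuclideanSpace ℝ (Fin d),
      (∫ x, Complex.exp (Complex.I * (⟪ξ, x⟫ : ℝ)) * (G s x : ℂ))
        = (mittagLeffler β (-(ν * ‖ξ‖ ^ α * s ^ β)) : ℂ))
    (t : ℝ) (ht : 0 < t) (x x' : EuclideanSpace ℝ (Fin d)) :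
    ∫ r in Ioc (0 : ℝ) t, ∫ y, (G (t - r) (x' - y) - G (t - r) (x - y)) ^ 2
      ≤ (2 * π ^ ((d : ℝ) / 2) * betaFn (((d : ℝ) + 2) / α) (2 - ((d : ℝ) + 2) / α)
            * ν ^ (-((d : ℝ) + 2) / α) * Real.Gamma (1 + β) ^ (((d : ℝ) + 2) / α))
          / ((2 * π) ^ (d : ℝ) * Real.Gamma ((d : ℝ) / 2) * α * (1 - ((d : ℝ) + 2) * β / α))
          * t ^ (1 - ((d : ℝ) + 2) * β / α) * ‖x' - x‖ ^ 2 := by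
  have : Nonempty (Fin d) := ⟨⟨0, hd⟩⟩
  simpa only [finrank_euclideanSpace_fin] using
    spatial_increment_upper_estimate_general hν hβ0 hβ1.le
      (by rwa [finrank_euclideanSpace_fin]) hF ht.le x x'
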